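/- arXiv:0809.3011 — 2 statements merged into one kernel-verified Lean document; each statement's English description precedes it below -/
import Mathlib

section
/- Suppose the σ-algebra Σ, viewed as a metric space under the distance ρ(A,B) = arctan(μ((A \ B) ∪ (B \ A))), is separable. Then the subspace G^o(ψ) of G(ψ), consisting of all f with ‖f‖_{L^p(μ)}/ψ(p) → 0 as ψ(p) → ∞, is a separable normed space under the norm ‖·‖_{G(ψ)}. -/
noncomputable section

open MeasureTheory Filter Set Topology
open scoped ENNReal NNReal

/-- The set of exponents `p` with `a < p < b` (where `b : ℝ≥0∞` may be `∞`). -/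
def expSet (a : ℝ) (b : ℝ≥0∞) : Set ℝ := {p : ℝ | a < p ∧ ENNReal.ofReal p < b}

/-- The filter of real exponents `p` tending to `b` from below (`p → b⁻`);
when `b = ∞` this amounts to `p → ∞`. -/
def atBbelow (b : ℝ≥0∞) : Filter ℝ :=
  Filter.comap ENNReal.ofReal (nhdsWithin b (Set.Iio b))

/-- The class `EΨ(a,b)`: continuous `ψ` on `(a,b)` with `ψ(p) ≥ 1` and `ψ(b-0) = ∞`. -/
def IsEPsi (a : ℝ) (b : ℝ≥0∞) (ψ : ℝ → ℝ) : Prop :=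
  ContinuousOn ψ (expSet a b) ∧ (∀ p ∈ expSet a b, 1 ≤ ψ p) ∧
    Filter.Tendsto ψ (atBbelow b) Filter.atTop

/-- Norm of the Bilateral Grand Lebesgue space `G(ψ; a, b)` over a measure `μ`:
`‖f‖_{G(ψ)} = sup_{p ∈ (a,b)} ‖f‖_{L^p(μ)} / ψ(p)`, with values in `ℝ≥0∞`. -/
def GNorm {α : Type*} [MeasurableSpace α] (μ : Measure α) (a : ℝ) (b : ℝ≥0∞)
    (ψ : ℝ → ℝ) (f : α → ℝ) : ℝ≥0∞ :=
  ⨆ p ∈ expSet a b, eLpNorm f (ENNReal.ofReal p) μ / ENNReal.ofReal (ψ p)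

/-- The class `Ψ(a,b)` (relative to a measure `μ`): positive continuous `ψ` on `(a,b)`
with `ψ(b-0) = ∞`, admitting a representation `ψ(p) = ‖f‖_{L^p(μ)}` for `p ∈ (a,b)`, where
the measurable `f` lies in `L^p(μ)` for all `p ∈ (a,b)`. -/
def IsPsi {α : Type*} [MeasurableSpace α] (μ : Measure α) (a : ℝ) (b : ℝ≥0∞)
    (ψ : ℝ → ℝ) : Prop :=
  ContinuousOn ψ (expSet a b) ∧ (∀ p ∈ expSet a b, 0 < ψ p) ∧
    Filter.Tendsto ψ (atBbelow b) Filter.atTop ∧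
    ∃ f : α → ℝ, AEStronglyMeasurable f μ ∧
      ∀ p ∈ expSet a b, eLpNorm f (ENNReal.ofReal p) μ = ENNReal.ofReal (ψ p)

/-- The fundamental function `φ(G(ψ;a,b), s) = sup_{p ∈ (a,b)} s^{1/p}/ψ(p)`, real-valued. -/
def fundR (a : ℝ) (b : ℝ≥0∞) (ψ : ℝ → ℝ) (s : ℝ) : ℝ :=
  ⨆ p : expSet a b, s ^ (1 / (p : ℝ)) / ψ p

/-- The fundamental function `φ(G(ψ;a,b), δ) = sup_{p ∈ (a,b)} δ^{1/p}/ψ(p)`, `ℝ≥0∞`-valued. -/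
def fundE (a : ℝ) (b : ℝ≥0∞) (ψ : ℝ → ℝ) (δ : ℝ≥0∞) : ℝ≥0∞ :=
  ⨆ p ∈ expSet a b, δ ^ (1 / p) / ENNReal.ofReal (ψ p)

/-- The defining condition of the subspace `G^o(ψ)` of `G(ψ)`:
`‖f‖_{L^p(μ)}/ψ(p) → 0` as `ψ(p) → ∞`. -/
def GoCond {α : Type*} [MeasurableSpace α] (μ : Measure α) (a : ℝ) (b : ℝ≥0∞)
    (ψ : ℝ → ℝ) (f : α → ℝ) : Prop :=
  ∀ ε : ℝ, 0 < ε → ∃ M : ℝ, ∀ p ∈ expSet a b, M ≤ ψ p →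
    eLpNorm f (ENNReal.ofReal p) μ / ENNReal.ofReal (ψ p) < ENNReal.ofReal ε

/-- The distance `ρ(A,B) = arctan μ((A \ B) ∪ (B \ A))` on the σ-algebra `Σ`
(with `arctan ∞ = π/2`). -/
def rhoDist {α : Type*} [MeasurableSpace α] (μ : Measure α) (A B : Set α) : ℝ :=
  if μ ((A \ B) ∪ (B \ A)) = ⊤ then Real.pi / 2
  else Real.arctan (μ ((A \ B) ∪ (B \ A))).toReal

section GrandLebesgue

variable {α : Type*} [MeasurableSpace α] {μ : Measure α} {a : ℝ} {b : ℝ≥0∞} {ψ : ℝ → ℝ}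

theorem one_le_ofReal_of_mem_expSet (ha : 1 ≤ a) {p : ℝ} (hp : p ∈ expSet a b) :
    1 ≤ ENNReal.ofReal p :=
  ENNReal.one_le_ofReal.2 (ha.trans hp.1.le)

theorem IsEPsi.one_le_ofReal (hψ : IsEPsi a b ψ) {p : ℝ} (hp : p ∈ expSet a b) :
    1 ≤ ENNReal.ofReal (ψ p) :=
  ENNReal.one_le_ofReal.2 (hψ.2.1 p hp)

theorem IsEPsi.div_le_self (hψ : IsEPsi a b ψ) {p : ℝ} (hp : p ∈ expSet a b) (x : ℝ≥0∞) :
    x / ENNReal.ofReal (ψ p) ≤ x :=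
  ENNReal.div_le_of_le_mul (le_mul_of_one_le_right' (hψ.one_le_ofReal hp))

/-- The exponents at which `ψ` is below a given level stay away from `b`. -/
theorem IsEPsi.exists_bound (hψ : IsEPsi a b ψ) (ha : 0 ≤ a) (hab : ENNReal.ofReal a < b) (M : ℝ) :
    ∃ c ∈ expSet a b, ∀ p ∈ expSet a b, ψ p < M → p ≤ c := by
  have h := hψ.2.2.eventually (eventually_ge_atTop M)
  obtain ⟨t, ht, hts⟩ := Filter.mem_comap.1 h
  obtain ⟨l, hl, hlt⟩ := (mem_nhdsLT_iff_exists_Ioo_subset' hab).1 ht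
  obtain ⟨q, hq, hqb⟩ := exists_between (max_lt hl hab)
  have hq_top : q ≠ ∞ := hqb.ne_top
  have hofReal : ENNReal.ofReal q.toReal = q := ENNReal.ofReal_toReal hq_top
  refine ⟨q.toReal, ⟨?_, by rwa [hofReal]⟩, fun p hp hpM => ?_⟩
  · exact (ENNReal.ofReal_lt_iff_lt_toReal ha hq_top).1 ((le_max_right _ _).trans_lt hq)
  · have hpl : ENNReal.ofReal p ≤ l := by
      by_contra! hlp
      exact absurd (hts (hlt ⟨hlp, hp.2⟩)) (not_le.2 hpM)
    exact (ENNReal.ofReal_le_iff_le_toReal hq_top).1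
      (hpl.trans ((le_max_left _ _).trans hq.le))

theorem GNorm_add_le (ha : 1 ≤ a) {f g : α → ℝ} (hf : AEStronglyMeasurable f μ)
    (hg : AEStronglyMeasurable g μ) :
    GNorm μ a b ψ (f + g) ≤ GNorm μ a b ψ f + GNorm μ a b ψ g := by
  refine iSup₂_le fun p hp => ?_
  calc eLpNorm (f + g) (ENNReal.ofReal p) μ / ENNReal.ofReal (ψ p)
      ≤ (eLpNorm f (ENNReal.ofReal p) μ + eLpNorm g (ENNReal.ofReal p) μ)
          / ENNReal.ofReal (ψ p) := by
        gcongr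
        exact eLpNorm_add_le hf hg (one_le_ofReal_of_mem_expSet ha hp)
    _ = _ := ENNReal.add_div
    _ ≤ _ := by
        gcongr
        · exact le_iSup₂ (f := fun p (_ : p ∈ expSet a b) =>
            eLpNorm f (ENNReal.ofReal p) μ / ENNReal.ofReal (ψ p)) p hp
        · exact le_iSup₂ (f := fun p (_ : p ∈ expSet a b) =>
            eLpNorm g (ENNReal.ofReal p) μ / ENNReal.ofReal (ψ p)) p hp

theorem GNorm_const_smul_le (k : ℝ) (f : α → ℝ) :
    GNorm μ a b ψ (k • f) ≤ ‖k‖ₑ * GNorm μ a b ψ f := by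
  refine iSup₂_le fun p hp => ?_
  rw [eLpNorm_const_smul, mul_div_assoc]
  gcongr
  exact le_iSup₂ (f := fun p (_ : p ∈ expSet a b) =>
    eLpNorm f (ENNReal.ofReal p) μ / ENNReal.ofReal (ψ p)) p hp

theorem GNorm_congr_ae {f g : α → ℝ} (h : f =ᵐ[μ] g) : GNorm μ a b ψ f = GNorm μ a b ψ g := by
  simp only [GNorm, eLpNorm_congr_ae h]

theorem IsEPsi.GNorm_le_of_eLpNorm_le (hψ : IsEPsi a b ψ) {f : α → ℝ} {K : ℝ≥0∞}
    (h : ∀ p ∈ expSet a b, eLpNorm f (ENNReal.ofReal p) μ ≤ K) : GNorm μ a b ψ f ≤ K :=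
  iSup₂_le fun p hp => (hψ.div_le_self hp _).trans (h p hp)

theorem goCond_of_eLpNorm_le {f : α → ℝ} {K : ℝ≥0∞} (hK : K ≠ ∞)
    (h : ∀ p ∈ expSet a b, eLpNorm f (ENNReal.ofReal p) μ ≤ K) : GoCond μ a b ψ f := by
  intro ε hε
  refine ⟨(K.toReal + 1) / ε, fun p hp hM => ?_⟩
  have hKε : K.toReal + 1 ≤ ε * ψ p := by
    rwa [div_le_iff₀' hε] at hM
  have hψp : 0 < ψ p := by
    have := K.toReal_nonneg
    exact (mul_pos_iff_of_pos_left hε).1 (by linarith)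
  refine ENNReal.div_lt_of_lt_mul ((h p hp).trans_lt ?_)
  rw [← ENNReal.ofReal_mul hε.le, ENNReal.lt_ofReal_iff_toReal_lt hK]
  linarith

theorem eLpNorm_indicator_one_le {A : Set α} {p : ℝ} (hp : 1 ≤ p) :
    eLpNorm (A.indicator fun _ => (1 : ℝ)) (ENNReal.ofReal p) μ ≤ μ A ^ (1 / p) := by
  refine (eLpNorm_indicator_const_le _ _).trans ?_
  simp [ENNReal.toReal_ofReal (zero_le_one.trans hp)]

theorem eLpNorm_indicator_one_le_max {A : Set α} {p : ℝ} (hp : 1 ≤ p) :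
    eLpNorm (A.indicator fun _ => (1 : ℝ)) (ENNReal.ofReal p) μ ≤ max 1 (μ A) := by
  have hp0 : 0 < p := zero_lt_one.trans_le hp
  calc _ ≤ μ A ^ (1 / p) := eLpNorm_indicator_one_le hp
    _ ≤ max 1 (μ A) ^ (1 / p) := by gcongr; exact le_max_right _ _
    _ ≤ max 1 (μ A) ^ (1 : ℝ) := by
        apply ENNReal.rpow_le_rpow_of_exponent_le (le_max_left _ _)
        rwa [div_le_one hp0]
    _ = _ := ENNReal.rpow_one _

/-- Indicators of sets of small measure have small norm. -/
theorem IsEPsi.exists_GNorm_indicator_le (hψ : IsEPsi a b ψ) (ha : 1 ≤ a)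
    (hab : ENNReal.ofReal a < b) {ε : ℝ} (hε : 0 < ε) :
    ∃ δ : ℝ, 0 < δ ∧ ∀ A : Set α, μ A < ENNReal.ofReal δ →
      GNorm μ a b ψ (A.indicator fun _ => (1 : ℝ)) ≤ ENNReal.ofReal ε := by
  obtain ⟨c, hc, hcM⟩ := hψ.exists_bound (zero_le_one.trans ha) hab (1 / ε)
  have hc0 : 0 < c := by linarith [hc.1]
  refine ⟨min 1 (ε ^ c), lt_min one_pos (Real.rpow_pos_of_pos hε _), fun A hA => ?_⟩
  have hA1 : μ A ≤ 1 := hA.le.trans (by simp)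
  have hAε : μ A ≤ ENNReal.ofReal ε ^ c := by
    rw [ENNReal.ofReal_rpow_of_pos hε]
    exact hA.le.trans (ENNReal.ofReal_le_ofReal (min_le_right _ _))
  refine iSup₂_le fun p hp => ?_
  have hp1 : 1 ≤ p := ha.trans hp.1.le
  have hp0 : 0 < p := zero_lt_one.trans_le hp1
  rcases lt_or_ge (ψ p) (1 / ε) with hlt | hge
  · calc _ ≤ _ := hψ.div_le_self hp _
      _ ≤ μ A ^ (1 / p) := eLpNorm_indicator_one_le hp1
      _ ≤ μ A ^ (1 / c) := by
          apply ENNReal.rpow_le_rpow_of_exponent_ge hA1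
          exact one_div_le_one_div_of_le hp0 (hcM p hp hlt)
      _ ≤ (ENNReal.ofReal ε ^ c) ^ (1 / c) := by gcongr
      _ = _ := by rw [← ENNReal.rpow_mul, mul_one_div_cancel hc0.ne', ENNReal.rpow_one]
  · refine ENNReal.div_le_of_le_mul ?_
    rw [← ENNReal.ofReal_mul hε.le]
    refine (eLpNorm_indicator_one_le_max hp1).trans ?_
    rw [max_eq_left hA1, ENNReal.one_le_ofReal]
    rwa [div_le_iff₀' hε] at hge

theorem lintegral_rpow_enorm_le {f : α → ℝ} {p : ℝ} (hp : 0 < p) {K : ℝ≥0∞}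
    (h : eLpNorm f (ENNReal.ofReal p) μ ≤ K) : ∫⁻ x, ‖f x‖ₑ ^ p ∂μ ≤ K ^ p := by
  rwa [eLpNorm_eq_lintegral_rpow_enorm_toReal (by simpa using hp) ENNReal.ofReal_ne_top,
    ENNReal.toReal_ofReal hp.le, one_div, ENNReal.rpow_inv_le_iff hp] at h

theorem eLpNorm_le_of_lintegral_rpow_enorm_le {f : α → ℝ} {p : ℝ} (hp : 0 < p) {K : ℝ≥0∞}
    (h : ∫⁻ x, ‖f x‖ₑ ^ p ∂μ ≤ K ^ p) : eLpNorm f (ENNReal.ofReal p) μ ≤ K := by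
  rwa [eLpNorm_eq_lintegral_rpow_enorm_toReal (by simpa using hp) ENNReal.ofReal_ne_top,
    ENNReal.toReal_ofReal hp.le, one_div, ENNReal.rpow_inv_le_iff hp]

theorem eLpNorm_ofReal_le_one_of_mem_Icc {f : α → ℝ} {p q r : ℝ} (hq : 1 ≤ q) (hqp : q ≤ p)
    (hpr : p ≤ r) (hf : AEStronglyMeasurable f μ)
    (hfq : eLpNorm f (ENNReal.ofReal q) μ ≤ 2⁻¹) (hfr : eLpNorm f (ENNReal.ofReal r) μ ≤ 2⁻¹) :
    eLpNorm f (ENNReal.ofReal p) μ ≤ 1 := by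
  have half_rpow : ∀ s : ℝ, 1 ≤ s → (2⁻¹ : ℝ≥0∞) ^ s ≤ 2⁻¹ := fun s hs => by
    simpa using ENNReal.rpow_le_rpow_of_exponent_ge (x := 2⁻¹) (by simp) hs
  refine eLpNorm_le_of_lintegral_rpow_enorm_le (by linarith) ?_
  rw [ENNReal.one_rpow]
  calc ∫⁻ x, ‖f x‖ₑ ^ p ∂μ ≤ ∫⁻ x, (‖f x‖ₑ ^ q + ‖f x‖ₑ ^ r) ∂μ := by
        refine lintegral_mono fun x => ?_
        rcases le_total ‖f x‖ₑ 1 with h | h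
        · exact (ENNReal.rpow_le_rpow_of_exponent_ge h hqp).trans le_self_add
        · exact (ENNReal.rpow_le_rpow_of_exponent_le h hpr).trans le_add_self
    _ = ∫⁻ x, ‖f x‖ₑ ^ q ∂μ + ∫⁻ x, ‖f x‖ₑ ^ r ∂μ :=
        lintegral_add_left' (hf.enorm.pow_const q) _
    _ ≤ 2⁻¹ ^ q + 2⁻¹ ^ r := by
        gcongr
        · exact lintegral_rpow_enorm_le (by linarith) hfq
        · exact lintegral_rpow_enorm_le (by linarith) hfr
    _ ≤ 2⁻¹ + 2⁻¹ := add_le_add (half_rpow q hq) (half_rpow r (hq.trans (hqp.trans hpr)))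
    _ = 1 := ENNReal.inv_two_add_inv_two

theorem eLpNorm_ofReal_le_of_mem_Icc {f : α → ℝ} {p q r δ : ℝ} (hq : 1 ≤ q) (hqp : q ≤ p)
    (hpr : p ≤ r) (hf : AEStronglyMeasurable f μ) (hδ : 0 < δ)
    (hfq : eLpNorm f (ENNReal.ofReal q) μ ≤ ENNReal.ofReal δ / 2)
    (hfr : eLpNorm f (ENNReal.ofReal r) μ ≤ ENNReal.ofReal δ / 2) :
    eLpNorm f (ENNReal.ofReal p) μ ≤ ENNReal.ofReal δ := by
  have hδ0 : ENNReal.ofReal δ ≠ 0 := by simpa using hδ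
  have henorm : ‖δ⁻¹‖ₑ = (ENNReal.ofReal δ)⁻¹ := by
    rw [Real.enorm_eq_ofReal (by positivity), ENNReal.ofReal_inv_of_pos hδ]
  have key : ∀ s : ℝ≥0∞, eLpNorm f s μ ≤ ENNReal.ofReal δ / 2 →
      eLpNorm (δ⁻¹ • f) s μ ≤ 2⁻¹ := fun s hs => by
    rw [eLpNorm_const_smul, henorm]
    calc _ ≤ (ENNReal.ofReal δ)⁻¹ * (ENNReal.ofReal δ / 2) := by gcongr
      _ = 2⁻¹ := by
        rw [div_eq_mul_inv, ← mul_assoc, ENNReal.inv_mul_cancel hδ0 ENNReal.ofReal_ne_top, one_mul]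
  have h := eLpNorm_ofReal_le_one_of_mem_Icc hq hqp hpr (hf.const_smul δ⁻¹) (key _ hfq) (key _ hfr)
  rwa [eLpNorm_const_smul, henorm, mul_comm, ← div_eq_mul_inv,
    ENNReal.div_le_iff hδ0 ENNReal.ofReal_ne_top, one_mul] at h

/-- Boundedness of the `L^p` norms over a set of exponents passes to the infimum of that set. -/
theorem eLpNorm_sInf_lt_top {f : α → ℝ} (hf : AEStronglyMeasurable f μ) {P : Set ℝ}
    (hP : P.Nonempty) (hP1 : ∀ p ∈ P, 1 ≤ p) {K : ℝ≥0∞} (hK : K ≠ ∞)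
    (h : ∀ p ∈ P, eLpNorm f (ENNReal.ofReal p) μ ≤ K) :
    eLpNorm f (ENNReal.ofReal (sInf P)) μ < ∞ := by
  have hs1 : 1 ≤ sInf P := le_csInf hP hP1
  have hs0 : 0 < sInf P := zero_lt_one.trans_le hs1
  obtain ⟨u, hu, hulim, huP⟩ := exists_seq_tendsto_sInf hP ⟨1, hP1⟩
  have hlim : ∀ x, Tendsto (fun n => ‖f x‖ₑ ^ u n) atTop (𝓝 (‖f x‖ₑ ^ sInf P)) := fun x => by
    have hpow : ∀ p : ℝ, 1 ≤ p → ‖f x‖ₑ ^ p = ((‖f x‖₊ ^ p : ℝ≥0) : ℝ≥0∞) := fun p hp =>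
      (ENNReal.coe_rpow_of_nonneg _ (zero_le_one.trans hp)).symm
    simp only [hpow _ hs1, fun n => hpow _ (hP1 _ (huP n)), ENNReal.tendsto_coe]
    exact tendsto_const_nhds.nnrpow hulim (Or.inr hs0)
  have hbound : ∀ n, ∫⁻ x, ‖f x‖ₑ ^ u n ∂μ ≤ max 1 K ^ u 0 := fun n =>
    (lintegral_rpow_enorm_le (zero_lt_one.trans_le (hP1 _ (huP n)))
      ((h _ (huP n)).trans (le_max_right 1 K))).trans
      (ENNReal.rpow_le_rpow_of_exponent_le (le_max_left _ _) (hu (Nat.zero_le n)))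
  have hfin : ∫⁻ x, ‖f x‖ₑ ^ sInf P ∂μ ≤ max 1 K ^ u 0 := by
    calc _ = ∫⁻ x, liminf (fun n => ‖f x‖ₑ ^ u n) atTop ∂μ := by
          simp only [(hlim _).liminf_eq]
      _ ≤ liminf (fun n => ∫⁻ x, ‖f x‖ₑ ^ u n ∂μ) atTop :=
          lintegral_liminf_le' fun n => hf.enorm.pow_const _
      _ ≤ liminf (fun _ : ℕ => max 1 K ^ u 0) atTop :=
          liminf_le_liminf (Eventually.of_forall hbound)
      _ = _ := by simp
  rw [eLpNorm_eq_lintegral_rpow_enorm_toReal (by simpa using hs0) ENNReal.ofReal_ne_top,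
    ENNReal.toReal_ofReal hs0.le]
  refine ENNReal.rpow_lt_top_of_nonneg (by positivity) (hfin.trans_lt ?_).ne
  exact ENNReal.rpow_lt_top_of_nonneg (zero_le_one.trans (hP1 _ (huP 0)))
    (max_lt ENNReal.one_lt_top hK.lt_top).ne

theorem eLpNorm_le_GNorm_mul {f : α → ℝ} (hG : GNorm μ a b ψ f < ∞) {p : ℝ}
    (hp : p ∈ expSet a b) :
    eLpNorm f (ENNReal.ofReal p) μ ≤ GNorm μ a b ψ f * ENNReal.ofReal (ψ p) := by
  have h : eLpNorm f (ENNReal.ofReal p) μ / ENNReal.ofReal (ψ p) ≤ GNorm μ a b ψ f :=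
    le_iSup₂ (f := fun p (_ : p ∈ expSet a b) =>
      eLpNorm f (ENNReal.ofReal p) μ / ENNReal.ofReal (ψ p)) p hp
  exact (ENNReal.div_le_iff_le_mul (Or.inr hG.ne) (Or.inl ENNReal.ofReal_ne_top)).1 h

/-- Simple functions supported on sets of finite measure are dense in `G^o(ψ)`. -/
theorem IsEPsi.exists_simpleFunc_GNorm_sub_le (hψ : IsEPsi a b ψ) (ha : 1 ≤ a)
    (hab : ENNReal.ofReal a < b) {f : α → ℝ} (hf : Measurable f) (hG : GNorm μ a b ψ f < ∞)
    (hGo : GoCond μ a b ψ f) {ε : ℝ} (hε : 0 < ε) :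
    ∃ s : SimpleFunc α ℝ, μ (Function.support s) < ∞ ∧
      GNorm μ a b ψ (f - s) ≤ ENNReal.ofReal ε := by
  obtain ⟨M, hM⟩ := hGo ε hε
  obtain ⟨c, hc, hcM⟩ := hψ.exists_bound (zero_le_one.trans ha) hab M
  have hc1 : 1 ≤ c := ha.trans hc.1.le
  have hcfin : eLpNorm f (ENNReal.ofReal c) μ < ∞ :=
    (eLpNorm_le_GNorm_mul hG hc).trans_lt (ENNReal.mul_lt_top hG ENNReal.ofReal_lt_top)
  let s : ℕ → SimpleFunc α ℝ := SimpleFunc.approxOn f hf univ 0 (mem_univ 0)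
  have hsle : ∀ n x, ‖(f - s n) x‖ ≤ ‖f x‖ := fun n x => by
    have h := SimpleFunc.edist_approxOn_le hf (mem_univ (0 : ℝ)) x n
    rw [edist_comm, edist_eq_enorm_sub, edist_zero_left] at h
    exact enorm_le_iff_norm_le.1 h
  have hslim : ∀ p : ℝ≥0∞, p ≠ ∞ → eLpNorm f p μ < ∞ →
      Tendsto (fun n => eLpNorm (f - ⇑(s n)) p μ) atTop (𝓝 0) := fun p hp hfp => by
    simp only [eLpNorm_sub_comm f (s _)]
    exact SimpleFunc.tendsto_approxOn_Lp_eLpNorm hf (mem_univ 0) hp (by simp) (by simpa using hfp)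
  have hssupp : ∀ n, μ (Function.support (s n)) < ∞ := fun n =>
    SimpleFunc.measure_support_lt_top_of_memLp (p := ENNReal.ofReal c) (s n)
      (SimpleFunc.memLp_approxOn hf ⟨hf.aestronglyMeasurable, hcfin⟩ (mem_univ 0) MemLp.zero n)
      (by simp; linarith) ENNReal.ofReal_ne_top
  have htail : ∀ n, ∀ p ∈ expSet a b, M ≤ ψ p →
      eLpNorm (f - ⇑(s n)) (ENNReal.ofReal p) μ / ENNReal.ofReal (ψ p) ≤ ENNReal.ofReal ε :=
    fun n p hp hMp =>
      (ENNReal.div_le_div_right (eLpNorm_mono (hsle n)) _).trans (hM p hp hMp).le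
  let P : Set ℝ := {p | p ∈ expSet a b ∧ ψ p < M}
  have hP1 : ∀ p ∈ P, 1 ≤ p := fun p hp => ha.trans hp.1.1.le
  rcases P.eq_empty_or_nonempty with hP | hP
  · refine ⟨s 0, hssupp 0, iSup₂_le fun p hp => htail 0 p hp ?_⟩
    by_contra! hlt
    exact (hP ▸ (show p ∈ P from ⟨hp, hlt⟩) : p ∈ (∅ : Set ℝ))
  have hinf : eLpNorm f (ENNReal.ofReal (sInf P)) μ < ∞ := by
    refine eLpNorm_sInf_lt_top hf.aestronglyMeasurable hP hP1
      (K := GNorm μ a b ψ f * ENNReal.ofReal M)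
      (ENNReal.mul_lt_top hG ENNReal.ofReal_lt_top).ne fun p hp => ?_
    refine (eLpNorm_le_GNorm_mul hG hp.1).trans ?_
    gcongr
    exact hp.2.le
  have hpos : 0 < ENNReal.ofReal ε / 2 := ENNReal.half_pos (by simpa using hε)
  obtain ⟨n, hn1, hn2⟩ :=
    (((hslim _ ENNReal.ofReal_ne_top hinf).eventually_le_const hpos).and
      ((hslim _ ENNReal.ofReal_ne_top hcfin).eventually_le_const hpos)).exists
  refine ⟨s n, hssupp n, iSup₂_le fun p hp => ?_⟩
  rcases lt_or_ge (ψ p) M with hlt | hge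
  · refine (hψ.div_le_self hp _).trans ?_
    exact eLpNorm_ofReal_le_of_mem_Icc (le_csInf hP hP1) (csInf_le ⟨1, hP1⟩ ⟨hp, hlt⟩)
      (hcM p hp hlt) (hf.sub (s n).measurable).aestronglyMeasurable hε hn1 hn2
  · exact htail n p hp hge

theorem measure_lt_of_rhoDist_lt {A B : Set α} {δ : ℝ} (h : rhoDist μ A B < Real.arctan δ) :
    μ ((A \ B) ∪ (B \ A)) < ENNReal.ofReal δ := by
  unfold rhoDist at h
  split_ifs at h with htop
  · exact absurd h (Real.arctan_lt_pi_div_two δ).le.not_gt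
  · exact (ENNReal.lt_ofReal_iff_toReal_lt htop).2 (Real.arctan_strictMono.lt_iff_lt.1 h)

/-- The rational linear combinations of indicators of the sets of finite measure in `D`. -/
def rationalStep (μ : Measure α) (D : Set (Set α)) : Submodule ℚ (α → ℝ) :=
  Submodule.span ℚ ((fun B : Set α => B.indicator fun _ => (1 : ℝ)) '' {B ∈ D | μ B < ∞})

theorem countable_rationalStep {D : Set (Set α)} (hD : D.Countable) :
    (rationalStep μ D : Set (α → ℝ)).Countable := by
  have := ((hD.mono (sep_subset D fun B => μ B < ∞)).image
    fun B : Set α => B.indicator fun _ => (1 : ℝ)).to_subtype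
  have h : Countable (rationalStep μ D) := by
    rw [rationalStep, ← Subtype.range_coe (s := (fun B : Set α => B.indicator fun _ => (1 : ℝ)) ''
      {B ∈ D | μ B < ∞})]
    infer_instance
  exact h

theorem exists_eLpNorm_le_of_mem_rationalStep {D : Set (Set α)} (hD : ∀ A ∈ D, MeasurableSet A)
    {g : α → ℝ} (hg : g ∈ rationalStep μ D) :
    AEStronglyMeasurable g μ ∧
      ∃ K : ℝ≥0∞, K ≠ ∞ ∧ ∀ p : ℝ, 1 ≤ p → eLpNorm g (ENNReal.ofReal p) μ ≤ K := by
  induction hg using Submodule.span_induction with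
  | mem g hg =>
    obtain ⟨B, ⟨hB, hμB⟩, rfl⟩ := hg
    exact ⟨aestronglyMeasurable_const.indicator (hD B hB), max 1 (μ B),
      (max_lt ENNReal.one_lt_top hμB).ne, fun p hp => eLpNorm_indicator_one_le_max hp⟩
  | zero => exact ⟨aestronglyMeasurable_zero, 0, by simp, by simp⟩
  | add f g _ _ hf hg =>
    obtain ⟨hfm, K, hK, hfK⟩ := hf
    obtain ⟨hgm, L, hL, hgL⟩ := hg
    exact ⟨hfm.add hgm, K + L, ENNReal.add_ne_top.2 ⟨hK, hL⟩, fun p hp =>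
      (eLpNorm_add_le hfm hgm (ENNReal.one_le_ofReal.2 hp)).trans (add_le_add (hfK p hp) (hgL p hp))⟩
  | smul q g _ hg =>
    obtain ⟨hgm, K, hK, hgK⟩ := hg
    rw [← Rat.cast_smul_eq_qsmul ℝ]
    refine ⟨hgm.const_smul _, ‖(q : ℝ)‖ₑ * K,
      (ENNReal.mul_lt_top enorm_lt_top hK.lt_top).ne, fun p hp => ?_⟩
    rw [eLpNorm_const_smul]
    gcongr
    exact hgK p hp

theorem IsEPsi.exists_rationalStep_GNorm_const_indicator_sub_le (hψ : IsEPsi a b ψ) (ha : 1 ≤ a)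
    (hab : ENNReal.ofReal a < b) {D : Set (Set α)} (hDm : ∀ A ∈ D, MeasurableSet A)
    (hD : ∀ A : Set α, MeasurableSet A → ∀ ε : ℝ, 0 < ε → ∃ B ∈ D, rhoDist μ A B < ε)
    {A : Set α} (hA : MeasurableSet A) (hμA : μ A < ∞) (k : ℝ) {ε : ℝ} (hε : 0 < ε) :
    ∃ g ∈ rationalStep μ D,
      GNorm μ a b ψ ((k • A.indicator fun _ => (1 : ℝ)) - g) ≤ ENNReal.ofReal ε := by
  let m : ℝ := (max 1 (μ A)).toReal
  have hmtop : max 1 (μ A) ≠ ∞ := (max_lt ENNReal.one_lt_top hμA).ne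
  have hm : 0 < m := ENNReal.toReal_pos (by simp) hmtop
  obtain ⟨q, hq⟩ := exists_rat_near k (show 0 < ε / 2 / m by positivity)
  obtain ⟨δ, hδ, hsmall⟩ := hψ.exists_GNorm_indicator_le (μ := μ) ha hab
    (show 0 < ε / 2 / (|(q : ℝ)| + 1) by positivity)
  obtain ⟨B, hB, hAB⟩ := hD A hA (Real.arctan δ) (Real.arctan_pos.2 hδ)
  have hμAB := measure_lt_of_rhoDist_lt hAB
  have hμB : μ B < ∞ := by
    have hsub : B ⊆ A ∪ ((A \ B) ∪ (B \ A)) := fun x hx => by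
      by_cases hxA : x ∈ A <;> simp [hx, hxA]
    exact (measure_mono hsub).trans_lt ((measure_union_le _ _).trans_lt
      (ENNReal.add_lt_top.2 ⟨hμA, hμAB.trans ENNReal.ofReal_lt_top⟩))
  have hAm : AEStronglyMeasurable (A.indicator fun _ => (1 : ℝ)) μ :=
    aestronglyMeasurable_const.indicator hA
  have hBm : AEStronglyMeasurable (B.indicator fun _ => (1 : ℝ)) μ :=
    aestronglyMeasurable_const.indicator (hDm B hB)
  have h1 : GNorm μ a b ψ (A.indicator fun _ => (1 : ℝ)) ≤ ENNReal.ofReal m := by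
    rw [ENNReal.ofReal_toReal hmtop]
    exact hψ.GNorm_le_of_eLpNorm_le fun p hp => eLpNorm_indicator_one_le_max (ha.trans hp.1.le)
  have h2 : GNorm μ a b ψ ((A.indicator fun _ => (1 : ℝ)) - B.indicator fun _ => (1 : ℝ))
      ≤ ENNReal.ofReal (ε / 2 / (|(q : ℝ)| + 1)) := by
    refine le_trans (iSup₂_mono fun p hp => ENNReal.div_le_div_right
      (eLpNorm_mono fun x => ?_) _) (hsmall _ hμAB)
    by_cases hxA : x ∈ A <;> by_cases hxB : x ∈ B <;> simp [hxA, hxB]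
  refine ⟨q • B.indicator fun _ => (1 : ℝ),
    Submodule.smul_mem _ q (Submodule.subset_span ⟨B, ⟨hB, hμB⟩, rfl⟩), ?_⟩
  rw [← Rat.cast_smul_eq_qsmul ℝ]
  have hsplit : (k • A.indicator fun _ => (1 : ℝ)) - (q : ℝ) • (B.indicator fun _ => (1 : ℝ))
      = (k - q) • (A.indicator fun _ => (1 : ℝ))
        + (q : ℝ) • ((A.indicator fun _ => (1 : ℝ)) - B.indicator fun _ => (1 : ℝ)) := by
    rw [sub_smul, smul_sub]; abel
  rw [hsplit]
  calc _ ≤ _ := GNorm_add_le ha (hAm.const_smul _) ((hAm.sub hBm).const_smul _)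
    _ ≤ ‖k - q‖ₑ * ENNReal.ofReal m
        + ‖(q : ℝ)‖ₑ * ENNReal.ofReal (ε / 2 / (|(q : ℝ)| + 1)) :=
        add_le_add ((GNorm_const_smul_le _ _).trans (by gcongr))
          ((GNorm_const_smul_le _ _).trans (by gcongr))
    _ = ENNReal.ofReal (|k - q| * m + |(q : ℝ)| * (ε / 2 / (|(q : ℝ)| + 1))) := by
        rw [ENNReal.ofReal_add (by positivity) (by positivity),
          ENNReal.ofReal_mul (abs_nonneg _), ENNReal.ofReal_mul (abs_nonneg _),
          Real.enorm_eq_ofReal_abs, Real.enorm_eq_ofReal_abs]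
    _ ≤ ENNReal.ofReal ε := by
        apply ENNReal.ofReal_le_ofReal
        have e1 : |k - q| * m ≤ ε / 2 := ((lt_div_iff₀ hm).1 hq).le
        have e2 : |(q : ℝ)| * (ε / 2 / (|(q : ℝ)| + 1)) ≤ ε / 2 := by
          rw [mul_div_assoc', div_le_iff₀ (by positivity)]
          nlinarith [abs_nonneg (q : ℝ)]
        linarith

theorem IsEPsi.exists_rationalStep_GNorm_simpleFunc_sub_le (hψ : IsEPsi a b ψ) (ha : 1 ≤ a)
    (hab : ENNReal.ofReal a < b) {D : Set (Set α)} (hDm : ∀ A ∈ D, MeasurableSet A)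
    (hD : ∀ A : Set α, MeasurableSet A → ∀ ε : ℝ, 0 < ε → ∃ B ∈ D, rhoDist μ A B < ε)
    (s : SimpleFunc α ℝ) (hs : μ (Function.support s) < ∞) {ε : ℝ} (hε : 0 < ε) :
    ∃ g ∈ rationalStep μ D, GNorm μ a b ψ (s - g) ≤ ENNReal.ofReal ε := by
  induction s using SimpleFunc.induction generalizing ε with
  | @const k A hA =>
    have hcoe : ⇑(SimpleFunc.piecewise A hA (SimpleFunc.const α k) (SimpleFunc.const α 0))
        = k • A.indicator fun _ => (1 : ℝ) := by
      ext x
      by_cases hx : x ∈ A <;> simp [hx]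
    rw [hcoe] at hs ⊢
    rcases eq_or_ne k 0 with rfl | hk
    · exact ⟨0, zero_mem _, hψ.GNorm_le_of_eLpNorm_le fun p _ => by simp⟩
    · refine hψ.exists_rationalStep_GNorm_const_indicator_sub_le ha hab hDm hD hA ?_ k hε
      refine (measure_mono fun x hx => ?_).trans_lt hs
      simp [hx, hk]
  | @add f g hdisj hf hg =>
    have hsupp : Function.support f ∪ Function.support g ⊆ Function.support (f + g) := by
      rintro x (hx | hx)
      · have hx' := Function.notMem_support.1 (disjoint_left.1 hdisj hx)
        simpa [hx'] using hx
      · have hx' := Function.notMem_support.1 (disjoint_right.1 hdisj hx)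
        simpa [hx'] using hx
    replace hs := (measure_mono hsupp).trans_lt hs
    obtain ⟨u, hu, hfu⟩ := hf ((measure_mono subset_union_left).trans_lt hs) (half_pos hε)
    obtain ⟨v, hv, hgv⟩ := hg ((measure_mono subset_union_right).trans_lt hs) (half_pos hε)
    refine ⟨u + v, add_mem hu hv, ?_⟩
    rw [SimpleFunc.coe_add, add_sub_add_comm, ← add_halves ε,
      ENNReal.ofReal_add (half_pos hε).le (half_pos hε).le]
    exact (GNorm_add_le ha
      (f.aestronglyMeasurable.sub (exists_eLpNorm_le_of_mem_rationalStep hDm hu).1)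
      (g.aestronglyMeasurable.sub (exists_eLpNorm_le_of_mem_rationalStep hDm hv).1)).trans
      (add_le_add hfu hgv)

end GrandLebesgue

/-- **Lemma 2.** Suppose the σ-algebra `Σ`, viewed as a metric space under the
distance `ρ(A,B) = arctan μ((A \ B) ∪ (B \ A))`, is separable. Then the subspace `G^o(ψ)` of
`G(ψ)` — all `f` with `‖f‖_{L^p(μ)}/ψ(p) → 0` as `ψ(p) → ∞` — is separable in the norm
`‖·‖_{G(ψ)}`, i.e. it contains a countable subset that is dense in it. -/
theorem Go_separable {α : Type*} [MeasurableSpace α] (μ : Measure α) [SigmaFinite μ]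
    (a : ℝ) (b : ℝ≥0∞) (ha : 1 ≤ a) (hab : ENNReal.ofReal a < b)
    (ψ : ℝ → ℝ) (hψ : IsEPsi a b ψ)
    (hsep : ∃ D : Set (Set α), D.Countable ∧ (∀ A ∈ D, MeasurableSet A) ∧
      ∀ A : Set α, MeasurableSet A → ∀ ε : ℝ, 0 < ε → ∃ B ∈ D, rhoDist μ A B < ε) :
    ∃ S : Set (α → ℝ), S.Countable ∧
      (∀ g ∈ S, AEStronglyMeasurable g μ ∧ GNorm μ a b ψ g < ⊤ ∧ GoCond μ a b ψ g) ∧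
      ∀ f : α → ℝ, AEStronglyMeasurable f μ → GNorm μ a b ψ f < ⊤ → GoCond μ a b ψ f →
        ∀ ε : ℝ, 0 < ε → ∃ g ∈ S, GNorm μ a b ψ (fun x => f x - g x) < ENNReal.ofReal ε := by
  obtain ⟨D, hDc, hDm, hD⟩ := hsep
  refine ⟨rationalStep μ D, countable_rationalStep hDc, fun g hg => ?_,
    fun f hf hG hGo ε hε => ?_⟩
  · obtain ⟨hgm, K, hK, hgK⟩ := exists_eLpNorm_le_of_mem_rationalStep hDm hg
    have hgK' : ∀ p ∈ expSet a b, eLpNorm g (ENNReal.ofReal p) μ ≤ K :=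
      fun p hp => hgK p (ha.trans hp.1.le)
    exact ⟨hgm, (hψ.GNorm_le_of_eLpNorm_le hgK').trans_lt hK.lt_top, goCond_of_eLpNorm_le hK hgK'⟩
  · obtain ⟨f', hf', hff'⟩ := hf.aemeasurable
    have hG' : GNorm μ a b ψ f' < ∞ := GNorm_congr_ae hff' ▸ hG
    have hGo' : GoCond μ a b ψ f' := by
      simpa only [GoCond, eLpNorm_congr_ae hff'] using hGo
    obtain ⟨s, hs, hfs⟩ := hψ.exists_simpleFunc_GNorm_sub_le ha hab hf' hG' hGo'
      (show 0 < ε / 4 by positivity)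
    obtain ⟨g, hg, hsg⟩ := hψ.exists_rationalStep_GNorm_simpleFunc_sub_le ha hab hDm hD s hs
      (show 0 < ε / 4 by positivity)
    have hgm := (exists_eLpNorm_le_of_mem_rationalStep hDm hg).1
    refine ⟨g, hg, ?_⟩
    have hae : (fun x => f x - g x) =ᵐ[μ] (f' - s) + (s - g) := by
      filter_upwards [hff'] with x hx
      simp [hx]
    calc GNorm μ a b ψ (fun x => f x - g x) = GNorm μ a b ψ ((f' - s) + (s - g)) :=
          GNorm_congr_ae hae
      _ ≤ GNorm μ a b ψ (f' - s) + GNorm μ a b ψ (s - g) :=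
          GNorm_add_le ha (hf'.aestronglyMeasurable.sub s.aestronglyMeasurable)
            (s.aestronglyMeasurable.sub hgm)
      _ ≤ ENNReal.ofReal (ε / 4) + ENNReal.ofReal (ε / 4) := add_le_add hfs hsg
      _ = ENNReal.ofReal (ε / 4 + ε / 4) := (ENNReal.ofReal_add (by positivity) (by positivity)).symm
      _ < ENNReal.ofReal ε := (ENNReal.ofReal_lt_ofReal_iff hε).2 (by linarith)
end
end

section
/- (Theorem 1.1.B) Let ψ ∈ Ψ(a,b) and ζ, ν ∈ EΨ(a,b) with ζ = ψ·ν. Then for every positive vector s = (s(1),…,s(k)) the operator norm of the dilation operator is exactly ‖σ_s‖(G(ψ) → G(ζ)) = φ(G(ν), s^{d+θ}), where s^{d+θ} = ∏_{r=1}^k s(r)^{d(r)+θ(r)}. -/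
noncomputable section

open MeasureTheory Filter Set Topology
open scoped ENNReal NNReal

/-- The space `X = ℝ₊^{d(1)} × ⋯ × ℝ₊^{d(k)}`, modelled as the dependent product
`∀ r : Fin k, (Fin (d r) → ℝ)`; the restriction to the positive orthant is encoded
in the measure `wMeasure` below. -/
abbrev PiX (k : ℕ) (d : Fin k → ℕ) : Type := ∀ r : Fin k, Fin (d r) → ℝ

/-- The positive orthant of `X`. -/
def orthant (k : ℕ) (d : Fin k → ℕ) : Set (PiX k d) := {x | ∀ r i, 0 < x r i}

/-- The weighted measure `μ(V) = ∫_V W(x) dx` on `X = ℝ₊^{d(1)} × ⋯ × ℝ₊^{d(k)}`. -/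
def wMeasure (k : ℕ) (d : Fin k → ℕ) (W : PiX k d → ℝ) : Measure (PiX k d) :=
  (volume.restrict (orthant k d)).withDensity fun x => ENNReal.ofReal (W x)

/-- The dilation operator `(σ_s f)(x) = f(x(d(1))/s(1), …, x(d(k))/s(k))`. -/
def dilate {k : ℕ} {d : Fin k → ℕ} (s : Fin k → ℝ) (f : PiX k d → ℝ) : PiX k d → ℝ :=
  fun x => f fun r i => x r i / s r

/-- `s^e = ∏_{r=1}^k s(r)^{e(r)}`. -/
def sPow {k : ℕ} (s e : Fin k → ℝ) : ℝ := ∏ r, s r ^ e r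

/-- The operator norm `‖σ_s‖(G(ψ) → G(ζ))` of the dilation operator. -/
def dilOpNorm {k : ℕ} {d : Fin k → ℕ} (μ : Measure (PiX k d)) (a : ℝ) (b : ℝ≥0∞)
    (ψ ζ : ℝ → ℝ) (s : Fin k → ℝ) : ℝ≥0∞ :=
  ⨆ f : {f : PiX k d → ℝ // AEStronglyMeasurable f μ},
    GNorm μ a b ζ (dilate s f.1) / GNorm μ a b ψ f.1

theorem pi_smul_measure {ι : Type*} [Fintype ι] {α : ι → Type*} [∀ i, MeasurableSpace (α i)]
    (μ : ∀ i, Measure (α i)) [∀ i, SigmaFinite (μ i)] (c : ι → ℝ≥0) :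
    Measure.pi (fun i => c i • μ i) = (∏ i, c i) • Measure.pi μ := by
  refine Measure.pi_eq fun t _ => ?_
  simp only [Measure.smul_apply, Measure.pi_pi, ENNReal.smul_def, smul_eq_mul,
    Finset.prod_mul_distrib, ENNReal.ofNNReal_finsetProd]

/-- The block-wise scaling `x ↦ (x(d(r)) / s(r))_r` as a measurable equivalence. -/
def blockScale (k : ℕ) (d : Fin k → ℕ) (s : Fin k → ℝ) (hs : ∀ r, 0 < s r) :
    PiX k d ≃ᵐ PiX k d where
  toFun x := fun r i => x r i / s r
  invFun x := fun r i => x r i * s r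
  left_inv x := by
    funext r i
    exact div_mul_cancel₀ _ (hs r).ne'
  right_inv x := by
    funext r i
    exact mul_div_cancel_right₀ _ (hs r).ne'
  measurable_toFun := by
    dsimp
    fun_prop
  measurable_invFun := by
    dsimp
    fun_prop

theorem map_volume_blockScale (k : ℕ) (d : Fin k → ℕ) (s : Fin k → ℝ) (hs : ∀ r, 0 < s r) :
    (volume : Measure (PiX k d)).map (blockScale k d s hs) =
      (∏ r, (s r).toNNReal ^ d r) • volume := by
  have hmap : ∀ r, (volume : Measure (Fin (d r) → ℝ)).map (fun y => (s r)⁻¹ • y) =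
      ((s r).toNNReal ^ d r) • volume := by
    intro r
    rw [Measure.map_addHaar_smul _ (inv_ne_zero (hs r).ne')]
    ext t _
    rw [Measure.smul_apply, Measure.smul_apply, ENNReal.smul_def, smul_eq_mul, smul_eq_mul]
    congr 1
    rw [Module.finrank_fin_fun, inv_pow, inv_inv, abs_of_pos (pow_pos (hs r) _),
      ENNReal.ofReal_pow (hs r).le]
    simp [ENNReal.ofReal]
  have hfun : (blockScale k d s hs : PiX k d → PiX k d) =
      fun x r => (fun y : Fin (d r) → ℝ => (s r)⁻¹ • y) (x r) := by
    funext x r i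
    simp [blockScale, div_eq_inv_mul]
  have hsf : ∀ r, SigmaFinite
      ((volume : Measure (Fin (d r) → ℝ)).map (fun y => (s r)⁻¹ • y)) := by
    intro r
    rw [hmap r]
    infer_instance
  rw [hfun, volume_pi, Measure.pi_map_pi (f := fun r (y : Fin (d r) → ℝ) => (s r)⁻¹ • y)
    (fun r => (measurable_const_smul _).aemeasurable)]
  simp_rw [hmap]
  exact pi_smul_measure _ _

theorem map_wMeasure_blockScale (k : ℕ) (d : Fin k → ℕ) (θ s : Fin k → ℝ) (hs : ∀ r, 0 < s r)
    (W : ∀ r : Fin k, (Fin (d r) → ℝ) → ℝ)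
    (hWhom : ∀ (r : Fin k) (lam : ℝ), 0 < lam → ∀ y, W r (lam • y) = lam ^ θ r * W r y) :
    (wMeasure k d fun x => ∏ r, W r (x r)).map (blockScale k d s hs) =
      ENNReal.ofReal (sPow s fun r => (d r : ℝ) + θ r) •
        wMeasure k d fun x => ∏ r, W r (x r) := by
  set D := blockScale k d s hs
  have horth : MeasurableSet (orthant k d) := by
    simp only [orthant, ofPred_forall]
    refine MeasurableSet.iInter fun r => MeasurableSet.iInter fun i => ?_
    exact measurableSet_lt measurable_const (by fun_prop)
  have hpre : D ⁻¹' orthant k d = orthant k d := by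
    ext x
    simp only [orthant, mem_preimage, mem_ofPred_eq]
    refine forall_congr' fun r => forall_congr' fun i => ?_
    exact div_pos_iff_of_pos_right (hs r)
  have hW : ∀ x, (ENNReal.ofReal (∏ r, W r (x r)) : ℝ≥0∞) =
      ENNReal.ofReal (∏ r, s r ^ θ r) * ENNReal.ofReal (∏ r, W r (D x r)) := by
    intro x
    rw [← ENNReal.ofReal_mul (Finset.prod_nonneg fun r _ => Real.rpow_nonneg (hs r).le _),
      ← Finset.prod_mul_distrib]
    congr 1
    refine Finset.prod_congr rfl fun r _ => ?_
    rw [← hWhom r _ (hs r)]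
    congr 1
    funext i
    exact (mul_div_cancel₀ _ (hs r).ne').symm
  have hc : ENNReal.ofReal (sPow s fun r => (d r : ℝ) + θ r) =
      ENNReal.ofReal (∏ r, s r ^ θ r) * ((∏ r, (s r).toNNReal ^ d r : ℝ≥0) : ℝ≥0∞) := by
    have : ((∏ r, (s r).toNNReal ^ d r : ℝ≥0) : ℝ≥0∞) = ENNReal.ofReal (∏ r, s r ^ d r) := by
      rw [ENNReal.ofReal_prod_of_nonneg fun r _ => pow_nonneg (hs r).le _]
      push_cast
      refine Finset.prod_congr rfl fun r _ => ?_
      rw [ENNReal.ofReal_pow (hs r).le]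
      rfl
    rw [this, ← ENNReal.ofReal_mul (Finset.prod_nonneg fun r _ => Real.rpow_nonneg (hs r).le _),
      ← Finset.prod_mul_distrib, sPow]
    congr 1
    refine Finset.prod_congr rfl fun r _ => ?_
    rw [add_comm, Real.rpow_add (hs r), Real.rpow_natCast]
  have hvol : (volume.restrict (orthant k d)).map D =
      (∏ r, (s r).toNNReal ^ d r) • volume.restrict (orthant k d) := by
    conv_lhs => rw [← hpre]
    rw [← Measure.restrict_map D.measurable horth, map_volume_blockScale, Measure.restrict_smul]
  ext t ht
  rw [Measure.map_apply D.measurable ht, wMeasure, withDensity_apply _ (D.measurable ht),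
    Measure.smul_apply, withDensity_apply _ ht, hc]
  rw [lintegral_congr hW, lintegral_const_mul' _ _ ENNReal.ofReal_ne_top, ← lintegral_map_equiv
    (fun y : PiX k d => ENNReal.ofReal (∏ r, W r (y r))) D,
    ← Measure.restrict_map D.measurable ht, hvol, Measure.restrict_smul, lintegral_smul_measure,
    smul_eq_mul, mul_assoc, ENNReal.smul_def, smul_eq_mul]

theorem eLpNorm_dilate {k : ℕ} {d : Fin k → ℕ} {μ : Measure (PiX k d)} {s : Fin k → ℝ}
    (hs : ∀ r, 0 < s r) {c : ℝ≥0∞} (hμ : μ.map (blockScale k d s hs) = c • μ)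
    (f : PiX k d → ℝ) {p : ℝ} (hp : 0 < p) :
    eLpNorm (dilate s f) (ENNReal.ofReal p) μ = c ^ (1 / p) * eLpNorm f (ENNReal.ofReal p) μ := by
  have h := (blockScale k d s hs).measurableEmbedding.eLpNorm_map_measure
    (g := f) (p := ENNReal.ofReal p) (μ := μ)
  rw [hμ, eLpNorm_smul_measure_of_ne_top ENNReal.ofReal_ne_top] at h
  rw [ENNReal.toReal_div, ENNReal.toReal_ofReal hp.le, ENNReal.toReal_one, smul_eq_mul] at h
  exact h.symm

/-- **Theorem 1.1.B.** Let `ψ ∈ Ψ(a,b)` and `ζ, ν ∈ EΨ(a,b)` with `ζ = ψ·ν`.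
Then for every positive vector `s` the operator norm of the dilation operator equals
`‖σ_s‖(G(ψ) → G(ζ)) = φ(G(ν), s^{d+θ})`, where `s^{d+θ} = ∏_r s(r)^{d(r)+θ(r)}`. -/
theorem dilation_opNorm_eq
    (k : ℕ) (d : Fin k → ℕ) (θ : Fin k → ℝ)
    (W : ∀ r : Fin k, (Fin (d r) → ℝ) → ℝ)
    (hWnn : ∀ r y, 0 ≤ W r y)
    (hWcont : ∀ r, ContinuousOn (W r) {y | y ≠ 0})
    (hWnontriv : ∀ r, ∃ y, W r y ≠ 0)
    (hWhom : ∀ (r : Fin k) (lam : ℝ), 0 < lam → ∀ y, W r (lam • y) = lam ^ θ r * W r y)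
    (a : ℝ) (b : ℝ≥0∞) (ha : 1 ≤ a) (hab : ENNReal.ofReal a < b)
    (ψ ζ ν : ℝ → ℝ)
    (hψ : IsPsi (wMeasure k d fun x => ∏ r, W r (x r)) a b ψ)
    (hζ : IsEPsi a b ζ) (hν : IsEPsi a b ν)
    (hmul : ∀ p ∈ expSet a b, ζ p = ψ p * ν p)
    (s : Fin k → ℝ) (hs : ∀ r, 0 < s r) :
    dilOpNorm (wMeasure k d fun x => ∏ r, W r (x r)) a b ψ ζ s =
      fundE a b ν (ENNReal.ofReal (sPow s fun r => (d r : ℝ) + θ r)) := by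
  set μ := wMeasure k d fun x => ∏ r, W r (x r)
  set c := ENNReal.ofReal (sPow s fun r => (d r : ℝ) + θ r)
  have hμ : μ.map (blockScale k d s hs) = c • μ :=
    map_wMeasure_blockScale k d θ s hs W hWhom
  obtain ⟨-, hψpos, -, f, hf, hfψ⟩ := hψ
  have hterm : ∀ g : PiX k d → ℝ, ∀ p ∈ expSet a b,
      eLpNorm (dilate s g) (ENNReal.ofReal p) μ / ENNReal.ofReal (ζ p) =
        c ^ (1 / p) / ENNReal.ofReal (ν p) *
          (eLpNorm g (ENNReal.ofReal p) μ / ENNReal.ofReal (ψ p)) := by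
    intro g p hp
    have hν0 : 0 < ν p := one_pos.trans_le (hν.2.1 p hp)
    rw [eLpNorm_dilate hs hμ g (one_pos.trans_le (ha.trans hp.1.le)), hmul p hp,
      ENNReal.ofReal_mul (hψpos p hp).le, mul_comm (ENNReal.ofReal (ψ p)),
      ENNReal.mul_div_mul_comm (Or.inr ENNReal.ofReal_ne_top) (Or.inl ENNReal.ofReal_ne_top)]
  refine le_antisymm (iSup_le fun g => ENNReal.div_le_of_le_mul ?_) ?_
  · refine iSup₂_le fun p hp => ?_
    rw [hterm g.1 p hp]
    exact mul_le_mul' (le_iSup₂ (f := fun p (_ : p ∈ expSet a b) =>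
        c ^ (1 / p) / ENNReal.ofReal (ν p)) p hp)
      (le_iSup₂ (f := fun p (_ : p ∈ expSet a b) =>
        eLpNorm g.1 (ENNReal.ofReal p) μ / ENNReal.ofReal (ψ p)) p hp)
  · have hone : ∀ p ∈ expSet a b,
        eLpNorm f (ENNReal.ofReal p) μ / ENNReal.ofReal (ψ p) = 1 := fun p hp => by
      rw [hfψ p hp]
      exact ENNReal.div_self (ENNReal.ofReal_pos.2 (hψpos p hp)).ne' ENNReal.ofReal_ne_top
    have hψf : GNorm μ a b ψ f ≤ 1 := iSup₂_le fun p hp => (hone p hp).le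
    have hζf : GNorm μ a b ζ (dilate s f) = fundE a b ν c := by
      refine iSup_congr fun p => iSup_congr fun hp => ?_
      rw [hterm f p hp, hone p hp, mul_one]
    refine le_trans ?_ (le_iSup (fun g : {g : PiX k d → ℝ // AEStronglyMeasurable g μ} =>
      GNorm μ a b ζ (dilate s g.1) / GNorm μ a b ψ g.1) ⟨f, hf⟩)
    rw [← hζf]
    exact (div_one (GNorm μ a b ζ (dilate s f))).symm.le.trans (ENNReal.div_le_div_left hψf _)
end
end
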